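/- arXiv:2502.05939 — 2 statements merged into one kernel-verified Lean document; each statement's English description precedes it below -/
import Mathlib

section
/- Let λ = (λ_1 ≤ … ≤ λ_n) be a weakly increasing sequence of positive integers with λ_i ≥ i for all i, and define the multivariate rook-Eulerian polynomial Q^{λ}(x_1, …, x_{n-1}) = Σ_σ Π_{i ∈ Asc(σ)} x_i, summed over all row-complete rook placements σ on λ, where Asc(σ) = {i ∈ [n-1] : σ_i < σ_{i+1}}. Then Q^{λ}(x) is same-phase stable: for every μ = (μ_1, …, μ_{n-1}) with all μ_i > 0, the univariate polynomial t ↦ Q^{λ}(tμ_1, …, tμ_{n-1}) is real-rooted. -/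
open Polynomial

/-- Row-complete rook placements on the Ferrers board `L` (with `n` rows): in row `i` a rook
is placed in column `(p i : ℕ) + 1 ∈ {1, …, L i}`, and all columns are distinct. -/
def RookPlacements {n : ℕ} (L : Fin n → ℕ) : Finset (∀ i : Fin n, Fin (L i)) :=
  Finset.univ.filter fun p => ∀ i j : Fin n, i ≠ j → (p i : ℕ) ≠ (p j : ℕ)

/-- The ascent set of a rook placement: the indices `i ∈ [n-1]` with `σ_i < σ_{i+1}`. -/
def ascSet {n : ℕ} (L : Fin n → ℕ) (p : ∀ i : Fin n, Fin (L i)) : Finset (Fin (n - 1)) :=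
  Finset.univ.filter fun i : Fin (n - 1) =>
    (p ⟨(i : ℕ), by have := i.isLt; omega⟩ : ℕ) < (p ⟨(i : ℕ) + 1, by have := i.isLt; omega⟩ : ℕ)

/-- The multivariate rook-Eulerian polynomial
`Q^λ(x_1, …, x_{n-1}) = Σ_σ Π_{i ∈ Asc(σ)} x_i`, summed over all row-complete rook
placements `σ` on `λ`. -/
noncomputable def rookEulerianMv {n : ℕ} (L : Fin n → ℕ) : MvPolynomial (Fin (n - 1)) ℝ :=
  ∑ p ∈ RookPlacements L, ∏ i ∈ ascSet L p, MvPolynomial.X i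

/-- A real polynomial is real-rooted if it is nonzero and all of its complex roots are real. -/
def RealRooted (p : Polynomial ℝ) : Prop :=
  p ≠ 0 ∧ ∀ z : ℂ, Polynomial.aeval z p = 0 → z.im = 0

/-! Fix `z` with `Im z > 0` and refine `Q^λ(μ_1 z, …, μ_{n-1} z)` by the rank of the last rook
among the columns not used by the earlier rooks. Appending a row of the board sends the refined
values `F_0, F_1, …` to `G_j = μ z ∑_{k ≤ j} F_k + ∑_{k > j} F_k`, because the new rook is an
ascent exactly when its rank is at least the rank of its predecessor. This step preserves the
property that for all `i ≤ j` the vectors `F_i`, `F_j`, `z F_i` occur in counterclockwise order,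
and nonzero vectors with that property have a nonzero sum. Hence the polynomial has no zero in
the upper half-plane, nor, by conjugation, in the lower one. -/

lemma realRooted_of_forall_im_pos {p : ℝ[X]} (hp : ∀ z : ℂ, 0 < z.im → aeval z p ≠ 0) :
    RealRooted p := by
  refine ⟨?_, fun z hz => ?_⟩
  · rintro rfl
    exact hp Complex.I (by simp) (map_zero _)
  · by_contra him
    rcases lt_or_gt_of_ne him with hneg | hpos
    · refine hp (starRingEnd ℂ z) (by simpa using hneg) ?_
      rw [aeval_conj, hz, map_zero]
    · exact hp z hpos hz

section Phase

local notation "ω" => Complex.orientation.areaForm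

attribute [local instance] Complex.finrank_real_complex_fact

lemma areaForm_mul_mul (z a b : ℂ) : ω (z * a) (z * b) = Complex.normSq z * ω a b := by
  simp only [Complex.areaForm, Complex.normSq_apply, map_mul, Complex.mul_im, Complex.mul_re,
    Complex.conj_re, Complex.conj_im]
  ring

lemma areaForm_self_mul (z a : ℂ) : ω a (z * a) = z.im * Complex.normSq a := by
  simp only [Complex.areaForm, Complex.normSq_apply, Complex.mul_im, Complex.mul_re,
    Complex.conj_re, Complex.conj_im]
  ring

/-- For `z` in the upper half-plane, the vectors `a`, `b`, `z * a` occur in counterclockwise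
order: if `a ≠ 0`, then `b` lies in the closed cone spanned by `a` and `z * a`. Stating this
through the area form makes it additive in `a` and in `b`; it holds for every `b` if `a = 0`. -/
def PhasePrecedes (z a b : ℂ) : Prop :=
  0 ≤ ω a b ∧ 0 ≤ ω b (z * a)

namespace PhasePrecedes

variable {z a b c : ℂ}

lemma ofReal_mul_iff {r : ℝ} (hr : 0 < r) : PhasePrecedes (r * z) a b ↔ PhasePrecedes z a b := by
  have hscale : ω b (r * z * a) = r * ω b (z * a) := by
    rw [mul_assoc, ← Complex.real_smul, map_smul, smul_eq_mul]
  rw [PhasePrecedes, hscale, mul_nonneg_iff_of_pos_left hr, PhasePrecedes]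

lemma add_right (hb : PhasePrecedes z a b) (hc : PhasePrecedes z a c) :
    PhasePrecedes z a (b + c) := by
  simp only [PhasePrecedes, map_add, LinearMap.add_apply]
  exact ⟨add_nonneg hb.1 hc.1, add_nonneg hb.2 hc.2⟩

lemma sum {ι κ : Type*} {s : Finset ι} {t : Finset κ} {F : ι → ℂ} {G : κ → ℂ}
    (h : ∀ i ∈ s, ∀ j ∈ t, PhasePrecedes z (F i) (G j)) :
    PhasePrecedes z (∑ i ∈ s, F i) (∑ j ∈ t, G j) := by
  simp only [PhasePrecedes, Finset.mul_sum, map_sum, LinearMap.sum_apply]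
  exact ⟨Finset.sum_nonneg fun j hj => Finset.sum_nonneg fun i hi => (h i hi j hj).1,
    Finset.sum_nonneg fun i hi => Finset.sum_nonneg fun j hj => (h i hi j hj).2⟩

lemma rotate (h : PhasePrecedes z a b) : PhasePrecedes z b (z * a) := by
  refine ⟨h.2, ?_⟩
  rw [areaForm_mul_mul]
  exact mul_nonneg (Complex.normSq_nonneg z) h.1

lemma add_add_mul (h : PhasePrecedes z a b) (hz : 0 ≤ z.im) :
    PhasePrecedes z (a + b) (b + z * a) := by
  have hself (c : ℂ) : 0 ≤ ω c (z * c) := by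
    rw [areaForm_self_mul]
    exact mul_nonneg hz (Complex.normSq_nonneg c)
  simp only [PhasePrecedes, mul_add, map_add, LinearMap.add_apply,
    Orientation.areaForm_apply_self]
  constructor
  · linarith [h.1, h.2, hself a]
  · linarith [h.rotate.2, h.2, hself b]

lemma left_eq_zero_of_add_eq_zero (h : PhasePrecedes z a b) (hz : 0 < z.im) (hab : a + b = 0) :
    a = 0 := by
  have hnonneg : 0 ≤ -(z.im * Complex.normSq a) := by
    rw [← areaForm_self_mul, ← LinearMap.neg_apply, ← map_neg, neg_eq_of_add_eq_zero_right hab]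
    exact h.2
  have hprod := mul_nonneg hz.le (Complex.normSq_nonneg a)
  have hzero : z.im * Complex.normSq a = 0 := by linarith
  exact Complex.normSq_eq_zero.1 ((mul_eq_zero_iff_left hz.ne').1 hzero)

end PhasePrecedes

end Phase

/-- At a point `z` of the upper half-plane, a sequence of nonzero complex numbers runs
counterclockwise and together with its image under multiplication by `z` stays in cyclic order.
It is the pointwise form of the interlacing of a sequence of polynomials evaluated at `z`. -/
structure PhaseInterlacing {ι : Type*} [LE ι] (z : ℂ) (F : ι → ℂ) : Prop where
  ne_zero : ∀ i, F i ≠ 0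
  precedes : ∀ ⦃i j⦄, i ≤ j → PhasePrecedes z (F i) (F j)

namespace PhaseInterlacing

variable {ι κ α : Type*} {z : ℂ} {F : ι → ℂ}

lemma ofReal_mul_iff [LE ι] {r : ℝ} (hr : 0 < r) :
    PhaseInterlacing (r * z) F ↔ PhaseInterlacing z F :=
  ⟨fun h => ⟨h.ne_zero, fun _ _ hij => (PhasePrecedes.ofReal_mul_iff hr).1 (h.precedes hij)⟩,
    fun h => ⟨h.ne_zero, fun _ _ hij => (PhasePrecedes.ofReal_mul_iff hr).2 (h.precedes hij)⟩⟩

lemma one [LE ι] (hz : 0 ≤ z.im) : PhaseInterlacing z (1 : ι → ℂ) := by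
  refine ⟨fun _ => one_ne_zero, fun i j _ => ?_⟩
  simpa [PhasePrecedes, Complex.areaForm] using hz

variable [LinearOrder ι] [Fintype ι]

lemma sum_ne_zero [Nonempty ι] (hF : PhaseInterlacing z F) (hz : 0 < z.im) : ∑ k, F k ≠ 0 := by
  intro hsum
  obtain ⟨i, hi⟩ := Finite.exists_min (id : ι → ι)
  have hprecedes : PhasePrecedes z (F i) (∑ k ∈ {i}ᶜ, F k) := by
    rw [← Finset.sum_singleton F i]
    exact PhasePrecedes.sum fun j hj k _ =>
      hF.precedes ((Finset.mem_singleton.1 hj).trans_le (hi k))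
  rw [Fintype.sum_eq_add_sum_compl i] at hsum
  exact hF.ne_zero i (hprecedes.left_eq_zero_of_add_eq_zero hz hsum)

variable [LinearOrder α] {f : ι → α}

lemma sum_filter_precedes (hF : PhaseInterlacing z F) (hf : Monotone f) {p q : α → Prop}
    [DecidablePred p] [DecidablePred q] (hpq : ∀ s t, p s → q t → s < t) :
    PhasePrecedes z (∑ k with p (f k), F k) (∑ k with q (f k), F k) := by
  refine PhasePrecedes.sum fun k hk l hl => hF.precedes (hf.reflect_lt (hpq _ _ ?_ ?_)).le
  · exact (Finset.mem_filter.1 hk).2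
  · exact (Finset.mem_filter.1 hl).2

lemma sum_ite_mul_ne_zero [Nonempty ι] (hF : PhaseInterlacing z F) (hz : 0 < z.im)
    (hf : Monotone f) (t : α) : ∑ k, (if f k ≤ t then z else 1) * F k ≠ 0 := by
  intro hsum
  simp only [ite_mul, one_mul, Finset.sum_ite] at hsum
  rw [← Finset.mul_sum] at hsum
  have hlow_high : PhasePrecedes z (∑ k with f k ≤ t, F k) (∑ k with ¬f k ≤ t, F k) :=
    hF.sum_filter_precedes (p := (· ≤ t)) (q := fun s => ¬s ≤ t) hf
      fun _ _ hp hq => hp.trans_lt (not_le.1 hq)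
  have hhigh : ∑ k with ¬f k ≤ t, F k = 0 :=
    hlow_high.rotate.left_eq_zero_of_add_eq_zero hz ((add_comm _ _).trans hsum)
  have hz0 : z ≠ 0 := by
    rintro rfl
    exact hz.false
  have hlow : ∑ k with f k ≤ t, F k = 0 := by
    rw [hhigh, add_zero] at hsum
    exact (mul_eq_zero_iff_left hz0).1 hsum
  refine hF.sum_ne_zero hz ?_
  rw [← Finset.sum_filter_add_sum_filter_not _ (fun k => f k ≤ t), hlow, hhigh, add_zero]

lemma sum_ite_mul_precedes (hF : PhaseInterlacing z F) (hz : 0 ≤ z.im) (hf : Monotone f)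
    {s t : α} (hst : s ≤ t) :
    PhasePrecedes z (∑ k, (if f k ≤ s then z else 1) * F k)
      (∑ k, (if f k ≤ t then z else 1) * F k) := by
  set low := ∑ k with f k ≤ s, F k with hlow
  set mid := ∑ k with s < f k ∧ f k ≤ t, F k with hmid
  set high := ∑ k with t < f k, F k with hhigh
  have hs : ∑ k, (if f k ≤ s then z else 1) * F k = mid + (high + z * low) := by
    simp only [hlow, hmid, hhigh, Finset.mul_sum, Finset.sum_filter, ← Finset.sum_add_distrib]
    exact Finset.sum_congr rfl fun k _ => by grind
  have ht : ∑ k, (if f k ≤ t then z else 1) * F k = high + z * low + z * mid := by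
    simp only [hlow, hmid, hhigh, Finset.mul_sum, Finset.sum_filter, ← Finset.sum_add_distrib]
    exact Finset.sum_congr rfl fun k _ => by grind
  have hlow_mid : PhasePrecedes z low mid :=
    hF.sum_filter_precedes (p := (· ≤ s)) (q := fun r => s < r ∧ r ≤ t) hf
      fun _ _ hp hq => hp.trans_lt hq.1
  have hmid_high : PhasePrecedes z mid high :=
    hF.sum_filter_precedes (p := fun r => s < r ∧ r ≤ t) (q := (t < ·)) hf
      fun _ _ hp hq => hp.2.trans_lt hq
  rw [hs, ht]
  exact (hmid_high.add_right hlow_mid.rotate).add_add_mul hz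

theorem sum_ite_mul [Nonempty ι] [Preorder κ] (hF : PhaseInterlacing z F) (hz : 0 < z.im)
    (hf : Monotone f) {g : κ → α} (hg : Monotone g) :
    PhaseInterlacing z fun j => ∑ k, (if f k ≤ g j then z else 1) * F k :=
  ⟨fun j => hF.sum_ite_mul_ne_zero hz hf (g j),
    fun _ _ hij => hF.sum_ite_mul_precedes hz.le hf (hg hij)⟩

end PhaseInterlacing

lemma lt_iff_count_le_count {P : ℕ → Prop} [DecidablePred P] {a c : ℕ} (ha : ¬P a) (hc : P c) :
    a < c ↔ Nat.count P a ≤ Nat.count P c := by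
  refine ⟨fun h => Nat.count_monotone P h.le, fun h => ?_⟩
  have hac : a ≤ c := not_lt.1 fun hca => (Nat.count_strict_mono hc hca).not_ge h
  exact hac.lt_of_ne fun heq => ha (heq ▸ hc)

section Placements

variable {n : ℕ} {L : Fin n → ℕ} {p : ∀ i, Fin (L i)}

lemma mem_rookPlacements_iff :
    p ∈ RookPlacements L ↔ Function.Injective fun i => (p i : ℕ) := by
  simp only [RookPlacements, Finset.mem_filter, Finset.mem_univ, true_and]
  exact ⟨fun h i j hij => not_imp_not.1 (h i j) hij, fun h i j hij => h.ne hij⟩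

/-- The column `c` contains no rook of `p`. Columns are numbered from `0`. -/
abbrev IsFreeColumn (p : ∀ i, Fin (L i)) (c : ℕ) : Prop :=
  ∀ i, (p i : ℕ) ≠ c

lemma infinite_isFreeColumn (p : ∀ i, Fin (L i)) : {c | IsFreeColumn p c}.Infinite := by
  have hcompl : {c | IsFreeColumn p c} = (Set.range fun i => (p i : ℕ))ᶜ := by
    ext c
    simp
  rw [hcompl]
  exact (Set.finite_range _).infinite_compl

lemma count_isFreeColumn_add (hp : p ∈ RookPlacements L) {N : ℕ} (hN : ∀ i, L i ≤ N) :
    Nat.count (IsFreeColumn p) N + n = N := by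
  have hoccupied : {c ∈ Finset.range N | ¬IsFreeColumn p c} =
      Finset.univ.image fun i => (p i : ℕ) := by
    ext c
    simp only [Finset.mem_filter, Finset.mem_range, not_forall, not_not, Finset.mem_image,
      Finset.mem_univ, true_and, and_iff_right_iff_imp]
    rintro ⟨i, rfl⟩
    exact (p i).isLt.trans_le (hN i)
  have hcard := Finset.card_filter_add_card_filter_not (s := Finset.range N) (IsFreeColumn p)
  rwa [hoccupied, Finset.card_image_of_injective _ (mem_rookPlacements_iff.1 hp),
    Finset.card_univ, Fintype.card_fin, Finset.card_range, ← Nat.count_eq_card_filter_range]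
    at hcard

end Placements

section LastRank

variable {m : ℕ}

/-- The rank of the last rook: the number of free columns to its left. -/
def lastRank {L : Fin (m + 1) → ℕ} (p : ∀ i, Fin (L i)) : ℕ :=
  Nat.count (IsFreeColumn p) (p (Fin.last m))

lemma lastRank_lt {L : Fin (m + 1) → ℕ} (hmono : Monotone L) {p : ∀ i, Fin (L i)}
    (hp : p ∈ RookPlacements L) : lastRank p < L (Fin.last m) - m := by
  have hcount := count_isFreeColumn_add hp fun i => hmono (Fin.le_last i)
  have hle : lastRank p ≤ Nat.count (IsFreeColumn p) (L (Fin.last m)) :=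
    Nat.count_monotone _ (p (Fin.last m)).isLt.le
  omega

lemma lastRank_of_fin_one {L : Fin 1 → ℕ} (p : ∀ i, Fin (L i)) : lastRank p = p 0 := by
  have hfree : ∀ c ∈ Finset.range (p 0), IsFreeColumn p c := fun c hc i => by
    rw [Subsingleton.elim i 0]
    exact (Finset.mem_range.1 hc).ne'
  rw [lastRank, Fin.last_zero, Nat.count_eq_card_filter_range, Finset.filter_true_of_mem hfree,
    Finset.card_range]

variable {L : Fin (m + 2) → ℕ}

lemma mem_rookPlacements_iff_init {p : ∀ i, Fin (L i)} :
    p ∈ RookPlacements L ↔ Fin.init p ∈ RookPlacements (fun i => L i.castSucc) ∧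
      IsFreeColumn (Fin.init p) (p (Fin.last (m + 1))) := by
  have hsnoc : (fun i => (p i : ℕ)) = Fin.snoc (α := fun _ => ℕ)
      (fun i => (Fin.init p i : ℕ)) (p (Fin.last (m + 1))) :=
    (Fin.snoc_init_self fun i => (p i : ℕ)).symm
  rw [mem_rookPlacements_iff, mem_rookPlacements_iff, hsnoc, Fin.snoc_injective_iff]
  simp [IsFreeColumn]

lemma lastRank_eq_count_init (p : ∀ i, Fin (L i)) :
    lastRank p = Nat.count (IsFreeColumn (Fin.init p)) (p (Fin.last (m + 1))) := by
  rw [lastRank, Nat.count_eq_card_filter_range, Nat.count_eq_card_filter_range]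
  congr 1
  refine Finset.filter_congr fun c hc => ?_
  rw [IsFreeColumn, Fin.forall_fin_succ']
  exact and_iff_left (Finset.mem_range.1 hc).ne'

lemma castSucc_last_lt_last_iff_lastRank_le {p : ∀ i, Fin (L i)} (hp : p ∈ RookPlacements L) :
    (p (Fin.last m).castSucc : ℕ) < p (Fin.last (m + 1)) ↔
      lastRank (Fin.init p) ≤ lastRank p := by
  rw [lastRank_eq_count_init p]
  exact lt_iff_count_le_count (fun h => h (Fin.last m) rfl) (mem_rookPlacements_iff_init.1 hp).2

lemma prod_ascSet_eq_prod_ascSet_init {R : Type*} [CommMonoid R] {p : ∀ i, Fin (L i)}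
    (hp : p ∈ RookPlacements L) (x : Fin (m + 1) → R) :
    ∏ i ∈ ascSet L p, x i =
      (if lastRank (Fin.init p) ≤ lastRank p then x (Fin.last m) else 1) *
        ∏ i ∈ ascSet (fun i => L i.castSucc) (Fin.init p), x i.castSucc := by
  simp only [← castSucc_last_lt_last_iff_lastRank_le hp, ascSet, Finset.prod_filter]
  exact (Fin.prod_univ_castSucc (n := m) _).trans (mul_comm _ _)

lemma existsUnique_rookPlacement_init_lastRank (hmono : Monotone L)
    {q : ∀ i : Fin (m + 1), Fin (L i.castSucc)}
    (hq : q ∈ RookPlacements fun i => L i.castSucc) {j : ℕ}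
    (hj : j < L (Fin.last (m + 1)) - (m + 1)) :
    ∃! p, p ∈ RookPlacements L ∧ lastRank p = j ∧ Fin.init p = q := by
  have hcount := count_isFreeColumn_add hq (N := L (Fin.last (m + 1)))
    fun i => hmono (Fin.le_last i.castSucc)
  have hlt : Nat.nth (IsFreeColumn q) j < L (Fin.last (m + 1)) :=
    Nat.nth_lt_of_lt_count (by omega)
  refine ⟨Fin.snoc q ⟨Nat.nth (IsFreeColumn q) j, hlt⟩, ⟨?_, ?_, Fin.init_snoc _ _⟩, ?_⟩
  · rw [mem_rookPlacements_iff_init, Fin.init_snoc, Fin.snoc_last]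
    exact ⟨hq, Nat.nth_mem_of_infinite (infinite_isFreeColumn q) j⟩
  · rw [lastRank_eq_count_init, Fin.init_snoc, Fin.snoc_last]
    exact Nat.count_nth_of_infinite (infinite_isFreeColumn q) j
  · rintro p ⟨hp, rfl, rfl⟩
    have hlast : Nat.nth (IsFreeColumn (Fin.init p)) (lastRank p) = p (Fin.last (m + 1)) := by
      rw [lastRank_eq_count_init, Nat.nth_count (mem_rookPlacements_iff_init.1 hp).2]
    simp only [hlast, Fin.eta, Fin.snoc_init_self]

end LastRank

section Refinement

variable {R : Type*} {m : ℕ}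

/-- The part of the value at `x` of the rook-Eulerian polynomial that comes from the placements
whose last rook has rank `k`. -/
noncomputable def rankedRookEulerian [CommSemiring R] (L : Fin (m + 1) → ℕ) (x : Fin m → R)
    (k : ℕ) : R :=
  ∑ p ∈ RookPlacements L with lastRank p = k, ∏ i ∈ ascSet L p, x i

lemma sum_mul_rankedRookEulerian [CommSemiring R] {L : Fin (m + 1) → ℕ} (hmono : Monotone L)
    (x : Fin m → R) (w : ℕ → R) :
    ∑ k : Fin (L (Fin.last m) - m), w k * rankedRookEulerian L x k =
      ∑ p ∈ RookPlacements L, w (lastRank p) * ∏ i ∈ ascSet L p, x i := by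
  rw [Fin.sum_univ_eq_sum_range (fun k => w k * rankedRookEulerian L x k),
    ← Finset.sum_fiberwise_of_maps_to fun p hp => Finset.mem_range.2 (lastRank_lt hmono hp)]
  refine Finset.sum_congr rfl fun k _ => ?_
  rw [rankedRookEulerian, Finset.mul_sum]
  refine Finset.sum_congr rfl fun p hp => ?_
  rw [(Finset.mem_filter.1 hp).2]

lemma sum_rankedRookEulerian [CommSemiring R] [Algebra ℝ R] {L : Fin (m + 1) → ℕ}
    (hmono : Monotone L) (x : Fin m → R) :
    ∑ k : Fin (L (Fin.last m) - m), rankedRookEulerian L x k =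
      MvPolynomial.aeval x (rookEulerianMv L) := by
  have hweighted := sum_mul_rankedRookEulerian hmono x fun _ => 1
  simp only [one_mul] at hweighted
  rw [hweighted, rookEulerianMv, map_sum]
  refine Finset.sum_congr rfl fun p _ => ?_
  rw [map_prod]
  exact Finset.prod_congr rfl fun i _ => (MvPolynomial.aeval_X x i).symm

lemma rankedRookEulerian_of_fin_one [CommSemiring R] {L : Fin 1 → ℕ} (x : Fin 0 → R) {k : ℕ}
    (hk : k < L 0) : rankedRookEulerian L x k = 1 := by
  have hfiber : {p ∈ RookPlacements L | lastRank p = k} =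
      {Fin.cons ⟨k, hk⟩ finZeroElim} := by
    refine Finset.eq_singleton_iff_unique_mem.2 ⟨?_, fun p hp => ?_⟩
    · rw [Finset.mem_filter, mem_rookPlacements_iff, lastRank_of_fin_one]
      exact ⟨Function.injective_of_subsingleton _, rfl⟩
    · funext i
      obtain rfl : i = 0 := Fin.fin_one_eq_zero i
      exact Fin.ext ((lastRank_of_fin_one p).symm.trans (Finset.mem_filter.1 hp).2)
  rw [rankedRookEulerian, hfiber, Finset.sum_singleton]
  exact Fin.prod_univ_zero _

theorem rankedRookEulerian_succ [CommSemiring R] {L : Fin (m + 2) → ℕ} (hmono : Monotone L)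
    (x : Fin (m + 1) → R) {j : ℕ} (hj : j < L (Fin.last (m + 1)) - (m + 1)) :
    rankedRookEulerian L x j = ∑ k : Fin (L (Fin.last m).castSucc - m),
      (if (k : ℕ) ≤ j then x (Fin.last m) else 1) *
        rankedRookEulerian (fun i => L i.castSucc) (fun i => x i.castSucc) k := by
  have hmono_init : Monotone fun i : Fin (m + 1) => L i.castSucc :=
    hmono.comp Fin.strictMono_castSucc.monotone
  rw [sum_mul_rankedRookEulerian hmono_init _ fun k => if k ≤ j then x (Fin.last m) else 1,
    rankedRookEulerian]
  refine Finset.sum_nbij Fin.init ?_ ?_ ?_ ?_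
  · exact fun p hp => (mem_rookPlacements_iff_init.1 (Finset.mem_filter.1 hp).1).1
  · intro p hp p' hp' hinit
    obtain ⟨hp, hrank⟩ := Finset.mem_filter.1 hp
    obtain ⟨hp', hrank'⟩ := Finset.mem_filter.1 hp'
    exact (existsUnique_rookPlacement_init_lastRank hmono (mem_rookPlacements_iff_init.1 hp').1
      hj).unique ⟨hp, hrank, hinit⟩ ⟨hp', hrank', rfl⟩
  · intro q hq
    obtain ⟨p, hp, hrank, hinit⟩ := (existsUnique_rookPlacement_init_lastRank hmono hq hj).exists
    exact ⟨p, Finset.mem_filter.2 ⟨hp, hrank⟩, hinit⟩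
  · intro p hp
    obtain ⟨hmem, rfl⟩ := Finset.mem_filter.1 hp
    exact prod_ascSet_eq_prod_ascSet_init hmem x

theorem phaseInterlacing_rankedRookEulerian {z : ℂ} (hz : 0 < z.im) {L : Fin (m + 1) → ℕ}
    (hmono : Monotone L) (hL : ∀ i : Fin (m + 1), (i : ℕ) + 1 ≤ L i) {μ : Fin m → ℝ}
    (hμ : ∀ i, 0 < μ i) :
    PhaseInterlacing z fun k : Fin (L (Fin.last m) - m) =>
      rankedRookEulerian L (fun i => μ i * z) k := by
  induction m with
  | zero =>
    have hone : (fun k : Fin (L (Fin.last 0) - 0) =>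
        rankedRookEulerian L (fun i => (μ i * z : ℂ)) k) = 1 :=
      funext fun k => rankedRookEulerian_of_fin_one _ k.isLt
    rw [hone]
    exact .one hz.le
  | succ m ih =>
    have hμ_last : 0 < μ (Fin.last m) := hμ (Fin.last m)
    have hμz : 0 < ((μ (Fin.last m) : ℂ) * z).im := by
      rw [Complex.im_ofReal_mul]
      exact mul_pos hμ_last hz
    have : NeZero (L (Fin.last m).castSucc - m) :=
      ⟨Nat.sub_ne_zero_of_lt (hL (Fin.last m).castSucc)⟩
    have hinit := ih (L := fun i => L i.castSucc) (μ := fun i => μ i.castSucc)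
      (hmono.comp Fin.strictMono_castSucc.monotone) (fun i => hL i.castSucc)
      fun i => hμ i.castSucc
    rw [← PhaseInterlacing.ofReal_mul_iff hμ_last] at hinit ⊢
    convert! hinit.sum_ite_mul hμz Fin.val_strictMono.monotone Fin.val_strictMono.monotone
      using 2 with j
    exact rankedRookEulerian_succ hmono _ j.isLt

end Refinement

lemma rookEulerianMv_of_fin_zero (L : Fin 0 → ℕ) : rookEulerianMv L = 1 := by
  have hplacements : RookPlacements L = Finset.univ :=
    Finset.filter_true_of_mem fun _ _ i => i.elim0
  rw [rookEulerianMv, hplacements, Fintype.sum_unique]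
  exact Finset.prod_eq_one fun i => i.elim0

/-- For every Ferrers board `λ = (λ_1 ≤ … ≤ λ_n)` of positive integers with `λ_i ≥ i`, the
multivariate rook-Eulerian polynomial `Q^λ(x)` is same-phase stable: for every tuple
`μ = (μ_1, …, μ_{n-1})` of positive reals, the univariate polynomial
`t ↦ Q^λ(t μ_1, …, t μ_{n-1})` is real-rooted. -/
theorem rookEulerianMv_samePhaseStable (n : ℕ) (L : Fin n → ℕ) (hmono : Monotone L)
    (hL : ∀ i : Fin n, (i : ℕ) + 1 ≤ L i)
    (μ : Fin (n - 1) → ℝ) (hμ : ∀ i, 0 < μ i) :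
    RealRooted (MvPolynomial.aeval (fun i => Polynomial.C (μ i) * Polynomial.X)
      (rookEulerianMv L)) := by
  refine realRooted_of_forall_im_pos fun z hz => ?_
  cases n with
  | zero => simp [rookEulerianMv_of_fin_zero]
  | succ m =>
    have : NeZero (L (Fin.last m) - m) := ⟨Nat.sub_ne_zero_of_lt (hL (Fin.last m))⟩
    rw [MvPolynomial.comp_aeval_apply]
    simp only [map_mul, aeval_C, aeval_X, Complex.coe_algebraMap]
    rw [← sum_rankedRookEulerian hmono]
    exact (phaseInterlacing_rankedRookEulerian hz hmono hL hμ).sum_ne_zero hz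
end

section
/- For every permutation π ∈ S_6, the descent-generating polynomial of the lower Bruhat interval, Σ_{σ ≤_B π} t^{des(σ)}, is real-rooted. -/
open Polynomial

/-- The number of inversions of a permutation: pairs of positions `i < j` with `σ i > σ j`. -/
def invCount {n : ℕ} (σ : Equiv.Perm (Fin n)) : ℕ :=
  (Finset.univ.filter fun p : Fin n × Fin n => p.1 < p.2 ∧ σ p.2 < σ p.1).card

/-- One step in the Bruhat order: `τ` is obtained from `σ` by swapping two (not
necessarily adjacent) entries in one-line notation, strictly increasing the number
of inversions. -/
def BruhatStep {n : ℕ} (σ τ : Equiv.Perm (Fin n)) : Prop :=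
  (∃ i j : Fin n, i ≠ j ∧ τ = σ * Equiv.swap i j) ∧ invCount σ < invCount τ

/-- The Bruhat order: `σ ≤_B π` iff there is a chain from `σ` to `π` of swaps, each
strictly increasing the number of inversions. -/
def BruhatLE {n : ℕ} (σ π : Equiv.Perm (Fin n)) : Prop :=
  Relation.ReflTransGen BruhatStep σ π

/-- The number of descents of a permutation: indices `i` with `σ_i > σ_{i+1}`. -/
def desCount {n : ℕ} (σ : Equiv.Perm (Fin n)) : ℕ :=
  (Finset.univ.filter fun i : Fin n =>
    ∃ h : (i : ℕ) + 1 < n, σ ⟨(i : ℕ) + 1, h⟩ < σ i).card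

open scoped Classical in
/-- The descent-generating polynomial `Σ_{σ ≤_B π} t^{des(σ)}` of the lower Bruhat
interval `[id, π]_B`. -/
noncomputable def bruhatDesPoly {n : ℕ} (π : Equiv.Perm (Fin n)) : Polynomial ℝ :=
  ∑ σ : Equiv.Perm (Fin n), if BruhatLE σ π then X ^ desCount σ else 0

/-!
By the rank-matrix criterion, `σ ≤_B π` if and only if, for all `i` and `j`, at most as many of the
first `i` entries are `≥ j` in `σ` as in `π`. A transposition that creates inversions raises ranks,
and conversely, if the ranks of `σ ≠ π` are dominated by those of `π`, a transposition near the
first disagreement takes `σ` up without exceeding the ranks of `π`.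

A real polynomial of degree `< n` which weakly alternates in sign at `n` points is real-rooted:
otherwise it is `q * r` with `q` a positive quadratic, so `r` alternates at the same points, has
degree `< n - 2`, and vanishes because its divided difference does.

Both criteria are decidable, which leaves a computation over the 720 permutations. To make it fit
for the kernel, all comparisons of a given rank with the ranks of the 720 permutations are
performed by a single subtraction of numbers whose digits are these ranks.
-/

open Finset Equiv

/-- The number of entries with value at least `j` among the first `i` entries of `σ`; these
numbers are the entries of the rank matrix of `σ`. -/
def topRank {n : ℕ} (σ : Equiv.Perm (Fin n)) (i j : ℕ) : ℕ :=
  #{k : Fin n | (k : ℕ) < i ∧ j ≤ (σ k : ℕ)}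

section Bruhat

variable {n : ℕ} {σ τ π : Perm (Fin n)} {i j : Fin n}

-- The injection sends an inversion `(p, q)` of `σ` to `(s p, s q)` when the transposition `s`
-- keeps `p` and `q` in order and fixes it otherwise; it misses `(i, j)`.
theorem invCount_lt_invCount_mul_swap (hij : i < j) (hσ : σ i < σ j) :
    invCount σ < invCount (σ * swap i j) := by
  set s := swap i j
  let φ : Fin n × Fin n → Fin n × Fin n := fun p ↦ if s p.1 < s p.2 then (s p.1, s p.2) else p
  have s_invol (p : Fin n) : s (s p) = p := swap_apply_self i j p
  have s_cases (p : Fin n) : p = i ∧ s p = j ∨ p = j ∧ s p = i ∨ p ≠ i ∧ p ≠ j ∧ s p = p := by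
    grind
  have inv_of_not_lt {p q : Fin n} (hpq : p < q) (h : σ q < σ p) (hspq : ¬ s p < s q) :
      (σ * s) q < (σ * s) p ∧ (p, q) ≠ (i, j) := by
    simp only [Perm.mul_apply]
    rcases s_cases p with hp | hp | hp <;> rcases s_cases q with hq | hq | hq <;> grind
  refine lt_of_le_of_lt (card_le_card_of_injOn (t := (univ.filter fun p : Fin n × Fin n ↦
    p.1 < p.2 ∧ (σ * s) p.2 < (σ * s) p.1).erase (i, j)) φ ?_ ?_) (card_erase_lt_of_mem ?_)
  · rintro ⟨p, q⟩ hpq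
    simp only [coe_filter, mem_univ, true_and, Set.mem_ofPred_eq] at hpq
    simp only [coe_erase, coe_filter, mem_univ, true_and, Set.mem_sdiff, Set.mem_singleton_iff,
      Set.mem_ofPred_eq]
    by_cases h : s p < s q
    · simp only [φ, h, if_true, Perm.mul_apply, s_invol]
      exact ⟨⟨trivial, hpq.2⟩, by grind⟩
    · simp only [φ, h, if_false]
      exact ⟨⟨hpq.1, (inv_of_not_lt hpq.1 hpq.2 h).1⟩, (inv_of_not_lt hpq.1 hpq.2 h).2⟩
  · rintro ⟨p, q⟩ hpq ⟨p', q'⟩ hpq' h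
    simp only [coe_filter, mem_univ, true_and, Set.mem_ofPred_eq] at hpq hpq'
    simp only [φ] at h
    grind
  · exact mem_filter.2 ⟨mem_univ _, hij, by simpa [s] using hσ⟩

theorem bruhatStep_iff :
    BruhatStep σ τ ↔ ∃ i j, i < j ∧ σ i < σ j ∧ τ = σ * swap i j := by
  constructor
  · rintro ⟨⟨i, j, hne, rfl⟩, hinv⟩
    wlog hij : i < j generalizing i j
    · rw [swap_comm] at hinv ⊢
      exact this j i hne.symm hinv (hne.symm.lt_of_le (not_lt.1 hij))
    refine ⟨i, j, hij, lt_of_not_ge fun hσ ↦ hinv.not_gt ?_, rfl⟩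
    have hσ' : σ j < σ i := hσ.lt_of_ne (σ.injective.ne hne.symm)
    simpa using invCount_lt_invCount_mul_swap (σ := σ * swap i j) hij (by simpa using hσ')
  · rintro ⟨i, j, hij, hσ, rfl⟩
    exact ⟨⟨i, j, hij.ne, rfl⟩, invCount_lt_invCount_mul_swap hij hσ⟩

theorem topRank_mul_swap (hij : i < j) (hσ : σ i < σ j) (k l : ℕ) :
    topRank (σ * swap i j) k l =
      topRank σ k l + if (i < k ∧ k ≤ j) ∧ σ i < l ∧ l ≤ σ j then 1 else 0 := by
  have split (ρ : Perm (Fin n)) : topRank ρ k l =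
      (if (i : ℕ) < k ∧ l ≤ ρ i then 1 else 0) + ((if (j : ℕ) < k ∧ l ≤ ρ j then 1 else 0) +
        ∑ p ∈ (univ.erase i).erase j, if (p : ℕ) < k ∧ l ≤ ρ p then 1 else 0) := by
    let f (p : Fin n) : ℕ := if (p : ℕ) < k ∧ l ≤ ρ p then 1 else 0
    have hj : j ∈ univ.erase i := by simp [hij.ne']
    rw [add_sum_erase _ f hj, add_sum_erase _ f (mem_univ i), topRank, card_filter]
  have rest : ∑ p ∈ (univ.erase i).erase j, (if (p : ℕ) < k ∧ l ≤ (σ * swap i j) p then 1 else 0) =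
      ∑ p ∈ (univ.erase i).erase j, if (p : ℕ) < k ∧ l ≤ σ p then 1 else 0 :=
    sum_congr rfl fun p hp ↦ by
      simp only [mem_erase] at hp
      rw [Perm.mul_apply, swap_apply_of_ne_of_ne hp.2.1 hp.1]
  rw [split, split σ, rest]
  simp only [Perm.mul_apply, swap_apply_left, swap_apply_right]
  split_ifs <;> omega

theorem BruhatLE.topRank_le (h : BruhatLE σ π) (k l : ℕ) : topRank σ k l ≤ topRank π k l := by
  induction h with
  | refl => rfl
  | tail _ hstep ih =>
    obtain ⟨i, j, hij, hσ, rfl⟩ := bruhatStep_iff.1 hstep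
    exact ih.trans (topRank_mul_swap hij hσ k l ▸ Nat.le_add_right _ _)

theorem topRank_eq_add (σ : Perm (Fin n)) (k : ℕ) {l m : ℕ} (hlm : l ≤ m) :
    topRank σ k l = #{p : Fin n | (p : ℕ) < k ∧ l ≤ σ p ∧ σ p < m} + topRank σ k m := by
  rw [topRank, topRank, ← card_union_of_disjoint (disjoint_filter.2 fun p _ ↦ by omega)]
  congr 1
  ext p
  simp only [mem_filter, mem_union, mem_univ, true_and]
  omega

theorem lt_of_topRank_le_of_forall_lt_eq (hle : ∀ k l, topRank σ k l ≤ topRank π k l)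
    (heq : ∀ p < i, σ p = π p) (hne : σ i ≠ π i) : σ i < π i := by
  by_contra! hlt
  replace hlt : π i < σ i := hlt.lt_of_ne hne.symm
  refine (hle (i + 1) (σ i)).not_gt (card_lt_card (ssubset_iff_of_subset ?_ |>.2 ⟨i, ?_, ?_⟩))
  · intro p hp
    simp only [mem_filter, mem_univ, true_and] at hp ⊢
    obtain hpi | rfl : p < i ∨ p = i := by omega
    · rwa [heq p hpi]
    · omega
  · simp
  · simpa using hlt

theorem topRank_lt_topRank (hle : ∀ k l, topRank σ k l ≤ topRank π k l)
    (heq : ∀ p < i, σ p = π p) (hgap : ∀ p, i < p → p < j → σ i < σ p → π i < σ p) {k l : ℕ}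
    (hik : i < k) (hkj : k ≤ j) (hil : σ i < l) (hlπ : l ≤ π i) :
    topRank σ k l < topRank π k l := by
  rw [topRank_eq_add σ k (m := π i + 1) (by omega), topRank_eq_add π k (m := π i + 1) (by omega)]
  refine add_lt_add_of_lt_of_le (card_lt_card (ssubset_iff_of_subset ?_ |>.2 ⟨i, ?_, ?_⟩)) (hle _ _)
  · intro p hp
    simp only [mem_filter, mem_univ, true_and] at hp ⊢
    have hpi : p < i := by
      by_contra! hip
      obtain rfl | hip := hip.eq_or_lt
      · omega
      · have := hgap p hip (by omega) (by omega)
        omega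
    rwa [← heq p hpi]
  · simp only [mem_filter, mem_univ, true_and]
    omega
  · simp only [mem_filter, mem_univ, true_and]
    omega

theorem exists_next_entry (heq : ∀ p < i, σ p = π p) (hlt : σ i < π i) :
    ∃ j, i < j ∧ σ i < σ j ∧ σ j ≤ π i ∧ ∀ p, i < p → p < j → σ i < σ p → π i < σ p := by
  obtain ⟨j, hj⟩ := exists_minimal_of_wellFoundedLT
    (fun j ↦ i < j ∧ σ i < σ j ∧ σ j ≤ π i) ⟨σ.symm (π i), by
      have hσ : σ (σ.symm (π i)) = π i := σ.apply_symm_apply _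
      refine ⟨lt_of_not_ge fun hle ↦ ?_, by rwa [hσ], hσ.le⟩
      obtain hlt' | heq' := hle.lt_or_eq
      · exact hlt'.ne (π.injective (by rw [← heq _ hlt', hσ]))
      · exact hlt.ne (by rw [← heq', hσ, heq'])⟩
  exact ⟨j, hj.prop.1, hj.prop.2.1, hj.prop.2.2, fun p hip hpj hp ↦
    lt_of_not_ge fun hpπ ↦ hj.not_prop_of_lt hpj ⟨hip, hp, hpπ⟩⟩

-- At the first disagreement `i` we have `σ i < π i`; exchanging `σ i` with the next later entry
-- in `(σ i, π i]` raises `topRank σ` only where it is strictly below `topRank π`.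
theorem exists_bruhatStep_topRank_le (hle : ∀ k l, topRank σ k l ≤ topRank π k l) (hne : σ ≠ π) :
    ∃ τ, BruhatStep σ τ ∧ ∀ k l, topRank τ k l ≤ topRank π k l := by
  obtain ⟨i, hi⟩ := exists_minimal_of_wellFoundedLT (fun i ↦ σ i ≠ π i) (by
    by_contra! h
    exact hne (Equiv.ext h))
  have heq : ∀ p < i, σ p = π p := fun p hp ↦ not_not.1 (hi.not_prop_of_lt hp)
  obtain ⟨j, hij, hσij, hσπ, hgap⟩ :=
    exists_next_entry heq (lt_of_topRank_le_of_forall_lt_eq hle heq hi.prop)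
  refine ⟨σ * swap i j, bruhatStep_iff.2 ⟨i, j, hij, hσij, rfl⟩, fun k l ↦ ?_⟩
  rw [topRank_mul_swap hij hσij]
  split_ifs with h
  · exact topRank_lt_topRank hle heq hgap h.1.1 h.1.2 h.2.1 (h.2.2.trans hσπ)
  · exact hle k l

theorem bruhatLE_iff_topRank_le :
    BruhatLE σ π ↔ ∀ k l, topRank σ k l ≤ topRank π k l := by
  refine ⟨BruhatLE.topRank_le, fun hle ↦ ?_⟩
  obtain ⟨τ, ⟨hστ, hτ⟩, hmax⟩ := (Set.toFinite
    {τ | BruhatLE σ τ ∧ ∀ k l, topRank τ k l ≤ topRank π k l}).exists_maximalFor invCount _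
      ⟨σ, .refl, hle⟩
  by_contra hσπ
  obtain ⟨ρ, hτρ, hρ⟩ := exists_bruhatStep_topRank_le hτ (by rintro rfl; exact hσπ hστ)
  exact hτρ.2.not_ge (hmax ⟨hστ.tail hτρ, hρ⟩ hτρ.2.le)

theorem topRank_zero_left (σ : Perm (Fin n)) (l : ℕ) : topRank σ 0 l = 0 := by
  simp [topRank]

theorem topRank_zero_right (σ : Perm (Fin n)) (k : ℕ) :
    topRank σ k 0 = #{p : Fin n | (p : ℕ) < k} := by
  simp [topRank]

theorem topRank_of_le_left (σ : Perm (Fin n)) {k : ℕ} (hk : n ≤ k) (l : ℕ) :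
    topRank σ k l = #{p : Fin n | l ≤ p} :=
  card_equiv σ fun p ↦ by simp [p.2.trans_le hk]

theorem topRank_of_le_right (σ : Perm (Fin n)) (k : ℕ) {l : ℕ} (hl : n ≤ l) :
    topRank σ k l = 0 := by
  simp only [topRank, card_eq_zero, filter_eq_empty_iff]
  omega

theorem bruhatLE_iff_forall_mem_range' :
    BruhatLE σ π ↔ ∀ k ∈ List.range' 1 (n - 1), ∀ l ∈ List.range' 1 (n - 1),
      topRank σ k l ≤ topRank π k l := by
  rw [bruhatLE_iff_topRank_le]
  refine ⟨fun h k _ l _ ↦ h k l, fun h k l ↦ ?_⟩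
  obtain rfl | hk := k.eq_zero_or_pos
  · simp [topRank_zero_left]
  obtain rfl | hl := l.eq_zero_or_pos
  · simp [topRank_zero_right]
  obtain hkn | hkn := le_or_gt n k
  · simp [topRank_of_le_left _ hkn]
  obtain hln | hln := le_or_gt n l
  · simp [topRank_of_le_right _ _ hln]
  exact h k (by simp; omega) l (by simp; omega)

end Bruhat

section RealRootedness

theorem RealRooted.pow {p : ℝ[X]} (hp : RealRooted p) (k : ℕ) : RealRooted (p ^ k) := by
  refine ⟨pow_ne_zero k hp.1, fun z hz ↦ hp.2 z ?_⟩
  rw [map_pow] at hz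
  exact eq_zero_of_pow_eq_zero hz

theorem neg_one_pow_mul_prod_sub_pos {K : Type*} [Field K] [LinearOrder K] [IsStrictOrderedRing K]
    {n : ℕ} {x : Fin n → K} (hx : StrictAnti x) (i : Fin n) :
    0 < (-1) ^ (i : ℕ) * ∏ j ∈ univ.erase i, (x i - x j) := by
  have herase : univ.erase i = Iio i ∪ Ioi i := by
    ext j
    simp [lt_or_lt_iff_ne]
  have hdisj : Disjoint (Iio i) (Ioi i) :=
    disjoint_left.2 fun j hj hj' ↦ (mem_Iio.1 hj).not_gt (mem_Ioi.1 hj')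
  calc 0 < (∏ j ∈ Iio i, (x j - x i)) * ∏ j ∈ Ioi i, (x i - x j) :=
        mul_pos (prod_pos fun j hj ↦ sub_pos.2 (hx (mem_Iio.1 hj)))
          (prod_pos fun j hj ↦ sub_pos.2 (hx (mem_Ioi.1 hj)))
    _ = (-1) ^ (i : ℕ) * ∏ j ∈ univ.erase i, (x i - x j) := by
      rw [herase, prod_union hdisj, ← mul_assoc]
      congr 1
      have hcard := Fin.card_Iio i
      rw [← hcard, ← prod_const, ← prod_mul_distrib]
      exact prod_congr rfl fun j _ ↦ by ring

-- The divided difference `∑ i, p (x i) / ∏ (x i - x j)` is the coefficient of `X ^ n` in `p`,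
-- which is zero, while all its terms are nonnegative.
theorem eq_zero_of_weakly_alternating {K : Type*} [Field K] [LinearOrder K] [IsStrictOrderedRing K]
    {n : ℕ} {x : Fin (n + 1) → K} (hx : StrictAnti x) {p : K[X]} (hp : p.degree < n)
    (halt : ∀ i : Fin (n + 1), 0 ≤ (-1) ^ (i : ℕ) * p.eval (x i)) : p = 0 := by
  have hinj : Set.InjOn x (univ : Finset (Fin (n + 1))) := hx.injective.injOn
  have hdeg : p.degree < #(univ : Finset (Fin (n + 1))) := by
    simpa using hp.trans (by norm_cast; omega)
  have hterm (i : Fin (n + 1)) : 0 ≤ p.eval (x i) / ∏ j ∈ univ.erase i, (x i - x j) := by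
    rw [← mul_div_mul_left _ _ (pow_ne_zero (i : ℕ) (neg_ne_zero.2 (one_ne_zero (α := K))))]
    exact div_nonneg (halt i) (neg_one_pow_mul_prod_sub_pos hx i).le
  have hsum : ∑ i, p.eval (x i) / ∏ j ∈ univ.erase i, (x i - x j) = 0 := by
    rw [← Lagrange.coeff_eq_sum hinj hdeg]
    exact coeff_eq_zero_of_degree_lt (by simpa using hp)
  refine eq_zero_of_degree_lt_of_eval_index_eq_zero univ hinj hdeg fun i hi ↦ ?_
  have hne : ∏ j ∈ univ.erase i, (x i - x j) ≠ 0 :=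
    right_ne_zero_of_mul (neg_one_pow_mul_prod_sub_pos hx i).ne'
  have hdiv := (sum_eq_zero_iff_of_nonneg fun i _ ↦ hterm i).1 hsum i hi
  exact (div_eq_zero_iff.1 hdiv).resolve_right hne

theorem RealRooted.of_weakly_alternating {n : ℕ} {x : Fin n → ℝ} (hx : StrictAnti x) {p : ℝ[X]}
    (hp : p ≠ 0) (hdeg : p.degree < n) (halt : ∀ i : Fin n, 0 ≤ (-1) ^ (i : ℕ) * p.eval (x i)) :
    RealRooted p := by
  refine ⟨hp, fun z hz ↦ ?_⟩
  by_contra him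
  obtain ⟨m, rfl⟩ : ∃ m, n = m + 1 := Nat.exists_eq_succ_of_ne_zero (by
    rintro rfl
    simp [hp] at hdeg)
  obtain ⟨r, rfl⟩ := quadratic_dvd_of_aeval_eq_zero_im_ne_zero p hz him
  set q : ℝ[X] := X ^ 2 - C (2 * z.re) * X + C (‖z‖ ^ 2) with hq
  have hq_pos (t : ℝ) : 0 < q.eval t := by
    have h : q.eval t = (t - z.re) ^ 2 + z.im ^ 2 := by
      simp only [hq, eval_add, eval_sub, eval_mul, eval_pow, eval_X, eval_C, Complex.sq_norm,
        Complex.normSq_apply]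
      ring
    rw [h]
    positivity
  have hq_deg : q.natDegree = 2 := by
    rw [hq]
    compute_degree!
  have hr : r ≠ 0 := right_ne_zero_of_mul hp
  refine hr (eq_zero_of_weakly_alternating hx ?_ fun i ↦ ?_)
  · rw [← natDegree_lt_iff_degree_lt hp, natDegree_mul (left_ne_zero_of_mul hp) hr, hq_deg] at hdeg
    rw [← natDegree_lt_iff_degree_lt hr]
    omega
  · have h := halt i
    rw [eval_mul, mul_left_comm] at h
    exact nonneg_of_mul_nonneg_right h (hq_pos _)

end RealRootedness

section CoefficientLists

/-- The numerator `b ^ (cs.length - 1) * p (a / b)` of the value at `a / b` of the polynomial `p`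
with coefficients `cs`, constant coefficient first. -/
def evalNumerator (a b : ℤ) : List ℕ → ℤ
  | [] => 0
  | c :: cs => c * b ^ cs.length + a * evalNumerator a b cs

/-- The sublist of `l` obtained by greedily picking entries at which `f` is alternately
nonnegative and nonpositive, starting with the sign `s`. -/
def alternatingSublist {α : Type*} (f : α → ℤ) : ℤ → List α → List α
  | _, [] => []
  | s, a :: l =>
    if 0 ≤ s * f a then a :: alternatingSublist f (-s) l else alternatingSublist f s l

variable {α : Type*} {f : α → ℤ}

theorem alternatingSublist_sublist (s : ℤ) (l : List α) : (alternatingSublist f s l).Sublist l := by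
  induction l generalizing s with
  | nil => exact .slnil
  | cons a l ih =>
    rw [alternatingSublist]
    split_ifs
    exacts [(ih _).cons_cons a, (ih s).cons a]

theorem nonneg_of_alternatingSublist (s : ℤ) (l : List α) (i : ℕ)
    (hi : i < (alternatingSublist f s l).length) :
    0 ≤ (-1) ^ i * (s * f (alternatingSublist f s l)[i]) := by
  induction l generalizing s i with
  | nil => simp [alternatingSublist] at hi
  | cons a l ih =>
    by_cases h : 0 ≤ s * f a
    · simp only [alternatingSublist, h, if_true] at hi ⊢
      cases i with
      | zero => simpa using h
      | succ i => simpa [pow_succ] using ih (-s) i (by simpa using hi)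
    · simp only [alternatingSublist, h, if_false] at hi ⊢
      exact ih s i hi

theorem coeff_ofDigits_X {R : Type*} [Semiring R] (cs : List ℕ) (i : ℕ) :
    (Nat.ofDigits (X : R[X]) cs).coeff i = cs.getD i 0 := by
  induction cs generalizing i with
  | nil => simp [Nat.ofDigits]
  | cons c cs ih => cases i <;> simp [Nat.ofDigits, coeff_natCast_ite, ih]

theorem degree_ofDigits_X_lt {R : Type*} [Semiring R] {cs : List ℕ} {m : ℕ}
    (h : ∀ c ∈ cs.drop m, c = 0) : (Nat.ofDigits (X : R[X]) cs).degree < m := by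
  refine (degree_lt_iff_coeff_zero _ _).2 fun i hi ↦ ?_
  rw [coeff_ofDigits_X]
  by_cases hlen : i < cs.length
  · have hmem : cs[i] ∈ cs.drop m := by
      rw [List.mem_drop_iff_getElem]
      exact ⟨i - m, by omega, by simp [Nat.add_sub_cancel' hi]⟩
    simp [hlen, h _ hmem]
  · simp [not_lt.1 hlen]

theorem pow_length_mul_eval_ofDigits_X {K : Type*} [Field K] [CharZero K] (a : ℤ) {b : ℤ}
    (hb : b ≠ 0) (cs : List ℕ) :
    (b : K) ^ cs.length * (Nat.ofDigits (X : K[X]) cs).eval (a / b : K) =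
      b * evalNumerator a b cs := by
  induction cs with
  | nil => simp [evalNumerator, Nat.ofDigits]
  | cons c cs ih =>
    have hb' : (b : K) ≠ 0 := Int.cast_ne_zero.2 hb
    calc
      _ = b * (c * b ^ cs.length) +
          a * (b ^ cs.length * (Nat.ofDigits (X : K[X]) cs).eval (a / b : K)) := by
        simp only [Nat.ofDigits, List.length_cons, eval_add, eval_mul, eval_X, eval_natCast]
        field_simp
        ring
      _ = b * evalNumerator a b (c :: cs) := by
        rw [ih, evalNumerator]
        push_cast
        ring

theorem ofDigits_X_ne_zero {R : Type*} [Semiring R] [CharZero R] {cs : List ℕ}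
    (h : ∃ c ∈ cs, c ≠ 0) : Nat.ofDigits (X : R[X]) cs ≠ 0 := by
  obtain ⟨c, hc, hne⟩ := h
  obtain ⟨i, hi, rfl⟩ := List.mem_iff_getElem.1 hc
  refine fun h0 ↦ hne ?_
  simpa [coeff_ofDigits_X, hi] using congrArg (coeff · i) h0

/-- A test for real-rootedness of the polynomial with coefficients `cs`: it is nonzero and has as
many sign alternations at the points `a / b`, for `a` in `points`, as the degree requires. -/
def AlternationTest (points : List ℤ) (b : ℤ) (cs : List ℕ) : Prop :=
  (∃ c ∈ cs, c ≠ 0) ∧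
    ∀ c ∈ cs.drop (alternatingSublist (evalNumerator · b cs) 1 points).length, c = 0

instance (points : List ℤ) (b : ℤ) (cs : List ℕ) : Decidable (AlternationTest points b cs) :=
  inferInstanceAs (Decidable ((∃ c ∈ cs, c ≠ 0) ∧ ∀ c ∈ _, c = 0))

theorem AlternationTest.realRooted {points : List ℤ} {b : ℤ} {cs : List ℕ}
    (h : AlternationTest points b cs) (hpoints : points.SortedGT) (hb : 0 < b) :
    RealRooted (Nat.ofDigits (X : ℝ[X]) cs) := by
  set l := alternatingSublist (evalNumerator · b cs) 1 points
  have hb' : (0 : ℝ) < b := Int.cast_pos.2 hb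
  have hl_anti : StrictAnti l.get :=
    (hpoints.pairwise.sublist (alternatingSublist_sublist 1 points)).sortedGT.strictAnti_get
  have hanti : StrictAnti fun i : Fin l.length ↦ (l[i] / b : ℝ) := fun i j hij ↦
    div_lt_div_of_pos_right (Int.cast_lt.2 (hl_anti hij)) hb'
  refine .of_weakly_alternating hanti (ofDigits_X_ne_zero h.1) (degree_ofDigits_X_lt h.2) fun i ↦ ?_
  refine (mul_nonneg_iff_of_pos_left (pow_pos hb' cs.length)).1 ?_
  have halt : (0 : ℝ) ≤ (-1) ^ (i : ℕ) * evalNumerator l[i] b cs := by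
    exact_mod_cast one_mul (evalNumerator l[i] b cs) ▸ nonneg_of_alternatingSublist 1 points i i.2
  rw [mul_left_comm, pow_length_mul_eval_ofDigits_X _ hb.ne', mul_left_comm]
  exact mul_nonneg hb'.le halt

end CoefficientLists

section KernelEvaluation

/-- `List.foldr`, defined through the bare recursor, which the kernel evaluates several times
faster than a definition by structural recursion. For the same reason `Nat.add` and its kin take
the place of notation in the definitions meant for evaluation. -/
def recFoldr {α β : Type*} (f : α → β → β) (b : β) (l : List α) : β :=
  List.rec b (fun a _ r ↦ f a r) l

theorem recFoldr_eq_foldr {α β : Type*} (f : α → β → β) (b : β) (l : List α) :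
    recFoldr f b l = l.foldr f b := by
  induction l with
  | nil => rfl
  | cons a l ih => exact congrArg (f a) ih

/-- `List.countP`, for evaluation by the kernel. -/
def recCount {α : Type*} (p : α → Bool) (l : List α) : ℕ :=
  recFoldr (fun a c ↦ Nat.add (cond (p a) 1 0) c) 0 l

theorem recCount_eq_countP {α : Type*} (p : α → Bool) (l : List α) : recCount p l = l.countP p := by
  rw [recCount, recFoldr_eq_foldr]
  induction l with
  | nil => rfl
  | cons a l ih =>
    rw [List.foldr_cons, ih, List.countP_cons, Nat.add_eq, Nat.add_comm]
    cases p a <;> rfl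

/-- Call-by-value application `k n`: recursion on `n` makes the kernel compute `n` to a literal
before it substitutes it into `k`. -/
def forceNat (n : ℕ) (k : ℕ → Bool) : Bool :=
  Nat.rec (k 0) (fun m _ ↦ k (Nat.succ m)) n

theorem forceNat_eq (n : ℕ) (k : ℕ → Bool) : forceNat n k = k n := by
  cases n <;> rfl

/-- Call-by-value application `k l`, with `force` for the entries of `l`. -/
def forceList {α : Type*} (force : α → (α → Bool) → Bool) (l : List α) :
    (List α → Bool) → Bool :=
  List.rec (fun k ↦ k []) (fun a _ r k ↦ force a fun b ↦ r fun m ↦ k (b :: m)) l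

theorem forceList_eq {α : Type*} {force : α → (α → Bool) → Bool}
    (hforce : ∀ a k, force a k = k a) (l : List α) (k : List α → Bool) :
    forceList force l k = k l := by
  induction l generalizing k with
  | nil => rfl
  | cons a l ih => exact (hforce a _).trans (ih _)

end KernelEvaluation

section Packing

variable {α : Type*} (k : ℕ) (l : List α)

/-- The values of `f` on `l` packed into one number as its base `2 ^ (k + 1)` digits, so that one
arithmetic operation acts on all of them at once. -/
def packed (f : α → ℕ) : ℕ :=
  recFoldr (fun a N ↦ Nat.add (f a) (Nat.mul (Nat.pow 2 (Nat.succ k)) N)) 0 l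

theorem packed_eq_ofDigits (f : α → ℕ) : packed k l f = Nat.ofDigits (2 ^ (k + 1)) (l.map f) := by
  rw [packed, recFoldr_eq_foldr, Nat.ofDigits_eq_foldr, List.foldr_map]
  rfl

theorem mul_packed (c : ℕ) (f : α → ℕ) : c * packed k l f = packed k l fun a ↦ c * f a := by
  simp only [packed_eq_ofDigits]
  induction l with
  | nil => simp
  | cons a l ih =>
    simp only [List.map_cons, Nat.ofDigits_cons, ← ih]
    ring

theorem packed_sub {f g : α → ℕ} (h : ∀ a ∈ l, g a ≤ f a) :
    packed k l f - packed k l g = packed k l fun a ↦ f a - g a := by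
  refine Nat.sub_eq_of_eq_add ?_
  simp only [packed_eq_ofDigits]
  induction l with
  | nil => simp
  | cons a l ih =>
    have ha : f a = f a - g a + g a := (Nat.sub_add_cancel (h a List.mem_cons_self)).symm
    simp only [List.map_cons, Nat.ofDigits_cons, ih fun b hb ↦ h b (List.mem_cons_of_mem a hb)]
    linarith

theorem packed_land {f g : α → ℕ} (hf : ∀ a ∈ l, f a < 2 ^ (k + 1))
    (hg : ∀ a ∈ l, g a < 2 ^ (k + 1)) :
    packed k l f &&& packed k l g = packed k l fun a ↦ f a &&& g a := by
  simp only [packed_eq_ofDigits]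
  induction l with
  | nil => simp
  | cons a l ih =>
    have hfa := hf a List.mem_cons_self
    have hga := hg a List.mem_cons_self
    simp only [List.map_cons, Nat.ofDigits_cons, ← ih (fun b hb ↦ hf b (List.mem_cons_of_mem a hb))
      fun b hb ↦ hg b (List.mem_cons_of_mem a hb)]
    refine Nat.eq_of_testBit_eq fun i ↦ ?_
    simp only [Nat.testBit_and, Nat.add_comm _ (2 ^ (k + 1) * _), Nat.testBit_two_pow_mul_add _ hfa,
      Nat.testBit_two_pow_mul_add _ hga,
      Nat.testBit_two_pow_mul_add _ (Nat.and_lt_two_pow (f a) hga)]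
    split_ifs <;> rfl

theorem packed_modEq (f : α → ℕ) : packed k l f ≡ (l.map f).sum [MOD 2 ^ (k + 1) - 1] := by
  rw [packed_eq_ofDigits, ← Nat.ofDigits_one]
  refine Nat.ofDigits_modEq' _ _ _ ?_ _
  exact Nat.modEq_sub Nat.one_le_two_pow

/-- The set `{a ∈ l | p a}`, encoded by raising bit `k` of the digits of its elements. -/
def flags (p : α → Bool) : ℕ :=
  packed k l fun a ↦ cond (p a) (Nat.pow 2 k) 0

theorem cond_two_pow_lt (b : Bool) : cond b (2 ^ k) 0 < 2 ^ (k + 1) := by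
  cases b <;> simp [Nat.pow_lt_pow_right]

theorem flags_land_flags (p q : α → Bool) :
    flags k l p &&& flags k l q = flags k l fun a ↦ p a && q a := by
  refine (packed_land k l (fun a _ ↦ cond_two_pow_lt k (p a))
    fun a _ ↦ cond_two_pow_lt k (q a)).trans ?_
  simp only [flags]
  congr 1
  ext a
  cases p a <;> cases q a <;> simp

-- Subtraction does not borrow across digits, and bit `k` of the digit `2 ^ k + c - f a` is raised
-- precisely when `f a ≤ c`.
theorem flags_land_sub (p : α → Bool) {f : α → ℕ} (hf : ∀ a ∈ l, f a ≤ 2 ^ k) {c : ℕ}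
    (hc : c < 2 ^ k) :
    flags k l p &&& ((2 ^ k + c) * packed k l (fun _ ↦ 1) - packed k l f) =
      flags k l fun a ↦ p a && decide (f a ≤ c) := by
  have hdigit (b : Bool) (m : ℕ) (hm : m ≤ 2 ^ k) :
      cond b (2 ^ k) 0 &&& (2 ^ k + c - m) = cond (b && decide (m ≤ c)) (2 ^ k) 0 := by
    cases b
    · simp
    · rw [cond_true, Bool.true_and, Nat.two_pow_and]
      by_cases h : m ≤ c
      · rw [Nat.add_sub_assoc h, Nat.testBit_two_pow_add_eq, Nat.testBit_lt_two_pow (by omega)]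
        simp [h]
      · rw [Nat.testBit_lt_two_pow (by omega)]
        simp [h]
  rw [mul_packed, packed_sub k l fun a ha ↦ by grind]
  refine (packed_land k l (fun a _ ↦ cond_two_pow_lt k (p a)) fun a _ ↦ ?_).trans ?_
  · rw [pow_succ]
    omega
  · simp only [packed_eq_ofDigits, flags, mul_one]
    exact congrArg _ (List.map_congr_left fun a ha ↦ hdigit (p a) (f a) (hf a ha))

-- Reduction modulo the base minus one adds up the digits.
theorem two_mul_flags_mod (p : α → Bool) (hl : l.length < 2 ^ (k + 1) - 1) :
    2 * flags k l p % (2 ^ (k + 1) - 1) = l.countP p := by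
  have hsum : (l.map fun a ↦ cond (p a) (Nat.pow 2 k) 0).sum = 2 ^ k * l.countP p := by
    induction l with
    | nil => rfl
    | cons a l ih =>
      rw [List.map_cons, List.sum_cons, ih (by grind), List.countP_cons]
      cases p a <;> simp [mul_add, add_comm]
  have h : 2 * flags k l p ≡ l.countP p [MOD 2 ^ (k + 1) - 1] := calc
    2 * flags k l p ≡ 2 * (2 ^ k * l.countP p) [MOD 2 ^ (k + 1) - 1] :=
      (hsum ▸ packed_modEq k l _).mul_left 2
    _ = 2 ^ (k + 1) * l.countP p := by ring
    _ ≡ 1 * l.countP p [MOD 2 ^ (k + 1) - 1] :=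
      (Nat.modEq_sub Nat.one_le_two_pow).mul_right _
    _ = l.countP p := one_mul _
  exact Nat.mod_eq_of_modEq h (List.countP_le_length.trans_lt hl)

/-- The flags of those `b ∈ l` with `f b ≤ f a` for all functions `f` in `fs`, computed from the
packings `Fs` of these functions and the packing `one` of the constant `1`. -/
def dominatedFlags (one : ℕ) (fs : List (α → ℕ)) (Fs : List ℕ) (a : α) : ℕ :=
  recFoldr (fun q N ↦ Nat.land N (Nat.sub (Nat.mul (Nat.add (Nat.pow 2 k) (q.1 a)) one) q.2))
    (Nat.mul (Nat.pow 2 k) one) (fs.zip Fs)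

theorem dominatedFlags_eq {fs : List (α → ℕ)} (hfs : ∀ f ∈ fs, ∀ b ∈ l, f b < 2 ^ k) {a : α}
    (ha : a ∈ l) :
    dominatedFlags k (packed k l fun _ ↦ 1) fs (fs.map (packed k l)) a =
      flags k l fun b ↦ fs.all fun f ↦ decide (f b ≤ f a) := by
  induction fs with
  | nil => exact (mul_packed k l (2 ^ k) fun _ ↦ 1).trans (by simp [flags])
  | cons f fs ih =>
    simp only [List.forall_mem_cons] at hfs
    refine (congrArg (Nat.land · _) (ih hfs.2)).trans ?_
    refine (flags_land_sub k l _ (fun b hb ↦ (hfs.1 b hb).le) (hfs.1 a ha)).trans ?_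
    simp only [List.all_cons, Bool.and_comm]

end Packing

section Words

variable {n : ℕ}

/-- The one-line notation of a permutation of `0, …, n - 1`. -/
def word (σ : Perm (Fin n)) : List ℕ :=
  (List.finRange n).map fun i ↦ (σ i : ℕ)

/-- `topRank`, read off the one-line notation. -/
def wordRank (i j : ℕ) (w : List ℕ) : ℕ :=
  recCount (Nat.ble j) (w.take i)

/-- `desCount`, read off the one-line notation. -/
def wordDes (w : List ℕ) : ℕ :=
  recCount (fun p ↦ Nat.blt p.2 p.1) (w.zip w.tail)

theorem countP_take_ofFn {α : Type*} (p : α → Bool) (f : Fin n → α) (i : ℕ) :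
    ((List.ofFn f).take i).countP p = #{k : Fin n | (k : ℕ) < i ∧ p (f k)} := by
  induction n generalizing i with
  | zero => simp
  | succ n ih =>
    cases i with
    | zero => simp
    | succ i =>
      rw [List.ofFn_succ, List.take_succ_cons, List.countP_cons, ih, Fin.card_filter_univ_succ]
      cases h : p (f 0) <;> simp

theorem countP_zip_tail_ofFn {α : Type*} (p : α × α → Bool) (f : Fin (n + 1) → α) :
    ((List.ofFn f).zip (List.ofFn f).tail).countP p =
      #{i : Fin n | p (f i.castSucc, f i.succ)} := by
  have hzip : (List.ofFn f).zip (List.ofFn f).tail =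
      (List.ofFn fun i : Fin n ↦ (f i.castSucc, f i.succ)).take n :=
    List.ext_getElem (by simp) fun i _ _ ↦ by simp [-List.ofFn_succ]
  rw [hzip, countP_take_ofFn]
  simp

theorem wordRank_word (σ : Perm (Fin n)) (i j : ℕ) : wordRank i j (word σ) = topRank σ i j := by
  rw [wordRank, recCount_eq_countP, word, ← List.ofFn_eq_map, countP_take_ofFn]
  simp [topRank]

theorem wordDes_word (σ : Perm (Fin n)) : wordDes (word σ) = desCount σ := by
  rw [wordDes, recCount_eq_countP, word, ← List.ofFn_eq_map]
  cases n with
  | zero => rfl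
  | succ n =>
    rw [countP_zip_tail_ofFn, desCount]
    refine card_bij (fun i _ ↦ i.castSucc) ?_ (fun i _ j _ h ↦ Fin.castSucc_injective n h) ?_
    · intro i hi
      have hlt : σ i.succ < σ i.castSucc := by simpa [Nat.blt] using hi
      exact mem_filter.2 ⟨mem_univ _, i.succ.2, hlt⟩
    · intro i hi
      obtain ⟨h, hlt⟩ := (mem_filter.1 hi).2
      exact ⟨⟨i, by omega⟩, by simpa [Nat.blt] using hlt, rfl⟩

theorem desCount_lt [NeZero n] (σ : Perm (Fin n)) : desCount σ < n := by
  obtain ⟨m, rfl⟩ := Nat.exists_eq_succ_of_ne_zero (NeZero.ne n)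
  refine (card_lt_univ_of_notMem (x := Fin.last m) ?_).trans_eq (Fintype.card_fin (m + 1))
  simp

theorem length_word (σ : Perm (Fin n)) : (word σ).length = n := by
  simp [word]

theorem wordRank_le_length (i j : ℕ) (w : List ℕ) : wordRank i j w ≤ w.length := by
  rw [wordRank, recCount_eq_countP]
  exact List.countP_le_length.trans (List.length_take_le' i w)

/-- The words of all permutations of `0, …, n - 1`. -/
def words (n : ℕ) : List (List ℕ) :=
  (permsOfList (List.finRange n)).map word

theorem mem_words {w : List ℕ} : w ∈ words n ↔ ∃ σ : Perm (Fin n), word σ = w := by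
  simp [words, mem_permsOfList_iff]

theorem countP_words (n : ℕ) (p : List ℕ → Bool) :
    (words n).countP p = #{σ : Perm (Fin n) | p (word σ)} := by
  have huniv : (univ : Finset (Perm (Fin n))) = 
      ⟨permsOfList (List.finRange n), nodup_permsOfList (List.nodup_finRange n)⟩ := by
    ext σ
    exact iff_of_true (mem_univ σ) (mem_permsOfList_of_mem fun i _ ↦ List.mem_finRange i)
  rw [huniv, words, List.countP_map, List.countP_eq_length_filter]
  simp [Finset.card, Finset.filter, Function.comp_def]

theorem length_words (n : ℕ) : (words n).length = n.factorial := by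
  simp [words, length_permsOfList]

end Words

section DescentCounts

variable {n : ℕ}

open scoped Classical in
theorem coeff_bruhatDesPoly (π : Perm (Fin n)) (d : ℕ) :
    (bruhatDesPoly π).coeff d = #{σ : Perm (Fin n) | BruhatLE σ π ∧ desCount σ = d} := by
  simp only [bruhatDesPoly, finsetSum_coeff, apply_ite (coeff · d), coeff_X_pow, coeff_zero,
    ← ite_and, sum_boole, eq_comm (a := d)]

/-- The functions on words corresponding to the nontrivial entries of rank matrices. -/
def wordRanks (n : ℕ) : List (List ℕ → ℕ) :=
  (List.range' 1 (n - 1)).flatMap fun i ↦ (List.range' 1 (n - 1)).map (wordRank i)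

theorem bruhatLE_iff_wordRanks {σ π : Perm (Fin n)} :
    BruhatLE σ π ↔ ∀ f ∈ wordRanks n, f (word σ) ≤ f (word π) := by
  simp only [bruhatLE_iff_forall_mem_range', wordRanks, List.forall_mem_flatMap,
    List.forall_mem_map, wordRank_word]

theorem lt_of_mem_wordRanks {f : List ℕ → ℕ} (hf : f ∈ wordRanks n) {w : List ℕ}
    (hw : w ∈ words n) {m : ℕ} (hm : n < m) : f w < m := by
  obtain ⟨i, -, hf⟩ := List.mem_flatMap.1 hf
  obtain ⟨j, -, rfl⟩ := List.mem_map.1 hf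
  obtain ⟨σ, rfl⟩ := mem_words.1 hw
  exact ((wordRank_le_length i j _).trans_eq (length_word σ)).trans_lt hm

/-- The coefficients of `bruhatDesPoly π`, for `π` with one-line notation `w`. -/
def desPolyCoeffs (n : ℕ) (w : List ℕ) : List ℕ :=
  (List.range n).map fun d ↦ (words n).countP fun v ↦
    ((wordRanks n).all fun f ↦ decide (f v ≤ f w)) && Nat.beq (wordDes v) d

theorem ofDigits_desPolyCoeffs [NeZero n] (π : Perm (Fin n)) :
    Nat.ofDigits (X : ℝ[X]) (desPolyCoeffs n (word π)) = bruhatDesPoly π := by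
  classical
  ext d
  rw [coeff_ofDigits_X, coeff_bruhatDesPoly]
  obtain hd | hd := lt_or_ge d n
  · simp [desPolyCoeffs, hd, countP_words, bruhatLE_iff_wordRanks, wordDes_word]
  · have hempty : ∀ σ : Perm (Fin n), ¬(BruhatLE σ π ∧ desCount σ = d) := fun σ h ↦
      (desCount_lt σ).not_ge (hd.trans_eq h.2.symm)
    simp [desPolyCoeffs, hd, hempty]

/-- Whether `test` holds for the coefficients of all polynomials `bruhatDesPoly π`, where `π` is a
permutation of `0, …, n - 1`. Intervals are represented by flags in digits of `k + 1` bits. -/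
def testDesPolyCoeffs (k n : ℕ) (test : List ℕ → Bool) : Bool :=
  forceList (forceList forceNat) (words n) fun ws ↦
  forceNat (packed k ws fun _ ↦ 1) fun one ↦
  forceList forceNat ((wordRanks n).map (packed k ws)) fun Fs ↦
  forceList forceNat
    ((List.range n).map fun d ↦ flags k ws fun v ↦ Nat.beq (wordDes v) d) fun Ds ↦
  ws.all fun w ↦
  forceNat (dominatedFlags k one (wordRanks n) Fs w) fun N ↦
  forceList forceNat
    (Ds.map fun D ↦ Nat.mod (Nat.mul 2 (Nat.land N D)) (Nat.sub (Nat.pow 2 (Nat.succ k)) 1)) test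

theorem of_testDesPolyCoeffs {k : ℕ} (hn : n < 2 ^ k) (hk : n.factorial < 2 ^ (k + 1) - 1)
    {test : List ℕ → Bool} (htest : testDesPolyCoeffs k n test) (π : Perm (Fin n)) :
    test (desPolyCoeffs n (word π)) := by
  simp only [testDesPolyCoeffs, forceNat_eq, forceList_eq forceNat_eq,
    forceList_eq (forceList_eq forceNat_eq), List.all_eq_true, List.map_map] at htest
  have hπ : word π ∈ words n := mem_words.2 ⟨π, rfl⟩
  convert htest _ hπ using 2
  refine List.map_congr_left fun d _ ↦ Eq.symm ?_
  rw [Function.comp_apply, dominatedFlags_eq k _ (fun f hf v hv ↦ lt_of_mem_wordRanks hf hv hn) hπ]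
  exact (congrArg (fun N ↦ 2 * N % (2 ^ (k + 1) - 1)) (flags_land_flags k _ _ _)).trans
    (two_mul_flags_mod k _ _ ((length_words n).trans_lt hk))

end DescentCounts

section SixLetters

/-- Six times the points `0, -1/6, -1/3, -1, -2, -5, -64`, at which all but two of the polynomials
`bruhatDesPoly π` for `π ∈ S_6` alternate often enough; found by computer search. -/
def alternationPoints : List ℤ :=
  [0, -1, -2, -6, -12, -30, -384]

theorem AlternationTest.realRooted_of_alternationPoints {cs : List ℕ}
    (h : AlternationTest alternationPoints 6 cs) : RealRooted (Nat.ofDigits (X : ℝ[X]) cs) :=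
  h.realRooted (by decide) (by norm_num)

-- The exceptions are `(1 + X) ^ 3` and `(1 + 4 * X + X ^ 2) ^ 2`, whose multiple roots are not
-- among the points.
theorem alternationTest_desPolyCoeffs_six (π : Perm (Fin 6)) :
    AlternationTest alternationPoints 6 (desPolyCoeffs 6 (word π)) ∨
      desPolyCoeffs 6 (word π) = [1, 3, 3, 1, 0, 0] ∨
        desPolyCoeffs 6 (word π) = [1, 8, 18, 8, 1, 0] := by
  refine of_decide_eq_true (of_testDesPolyCoeffs (k := 9) (test := fun cs ↦ decide
    (AlternationTest alternationPoints 6 cs ∨ cs = [1, 3, 3, 1, 0, 0] ∨ cs = [1, 8, 18, 8, 1, 0]))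
    (by norm_num) (by decide) ?_ π)
  decide +kernel

end SixLetters

/-- For every permutation `π ∈ S_6`, the descent-generating polynomial of the lower Bruhat
interval `[id, π]_B` is real-rooted. -/
theorem bruhatDesPoly_S6_realRooted (π : Equiv.Perm (Fin 6)) :
    RealRooted (bruhatDesPoly π) := by
  rw [← ofDigits_desPolyCoeffs]
  obtain h | h | h := alternationTest_desPolyCoeffs_six π
  · exact h.realRooted_of_alternationPoints
  · have hbase : AlternationTest alternationPoints 6 [1, 1] := by decide
    have hcube : Nat.ofDigits (X : ℝ[X]) [1, 3, 3, 1, 0, 0] = Nat.ofDigits X [1, 1] ^ 3 := by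
      simp [Nat.ofDigits]
      ring
    rw [h, hcube]
    exact hbase.realRooted_of_alternationPoints.pow 3
  · have hbase : AlternationTest alternationPoints 6 [1, 4, 1] := by decide
    have hsquare : Nat.ofDigits (X : ℝ[X]) [1, 8, 18, 8, 1, 0] = Nat.ofDigits X [1, 4, 1] ^ 2 := by
      simp [Nat.ofDigits]
      ring
    rw [h, hsquare]
    exact hbase.realRooted_of_alternationPoints.pow 2
end
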